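/- arXiv:2305.13271 — 2 statements merged into one kernel-verified Lean document; each statement's English description precedes it below -/
import Mathlib

section
/- Let X be a separable metric space with its Borel σ-algebra, let F : X → ℝ be continuous and non-constant (i.e. there exist x₁, x₂ ∈ X with F(x₁) ≠ F(x₂)), and let ν ∈ F_*(P(X)) ⊆ P(ℝ), i.e. ν is the pushforward under F of some Borel probability measure on X. Then the complement F_*⁻¹({ν})^c = {μ ∈ P(X) : F_*(μ) ≠ ν} is a dense open subset of P(X) for the topology of weak convergence. -/
open MeasureTheory

/-!
Openness: the pushforward `F_*` is weakly continuous because `F` is continuous, and singletons of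
`P(ℝ)` are closed because `P(ℝ)` is Hausdorff.

Density: the atoms `ν {F x₁}` and `ν {F x₂}` at two distinct values of `F` cannot both have mass
one, so some `x` has `ν {F x} < 1`. If `F_* μ = ν`, the mixtures `(1 - t) μ + t δ_x` tend weakly to
`μ` as `t → 0`, while for `t > 0` their pushforward has mass
`(1 - t) ν {F x} + t > ν {F x}` at `F x`, so it is not `ν`.
-/

/-- The mixture `(1 - t) μ + t δ_x` of a probability measure and a point mass. -/
noncomputable def diracMix {X : Type*} [MeasurableSpace X] (μ : ProbabilityMeasure X) (x : X)
    (t : ℝ) (h0 : 0 ≤ t) (h1 : t ≤ 1) : ProbabilityMeasure X :=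
  ⟨ENNReal.ofReal (1 - t) • (μ : Measure X) + ENNReal.ofReal t • Measure.dirac x, ⟨by
    simp [← ENNReal.ofReal_add (sub_nonneg.2 h1) h0]⟩⟩

lemma integral_diracMix {X : Type*} [TopologicalSpace X] [MeasurableSpace X]
    [OpensMeasurableSpace X] (μ : ProbabilityMeasure X) (x : X)
    (t : ℝ) (h0 : 0 ≤ t) (h1 : t ≤ 1) (f : BoundedContinuousFunction X ℝ) :
    ∫ y, f y ∂(diracMix μ x t h0 h1 : Measure X) = (1 - t) * ∫ y, f y ∂(μ : Measure X) + t * f x := by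
  have hd : ∫ y, f y ∂(Measure.dirac x) = f x :=
    integral_dirac' _ _ f.continuous.stronglyMeasurable
  simp only [diracMix, ProbabilityMeasure.coe_mk]
  rw [integral_add_measure ((f.integrable _).smul_measure ENNReal.ofReal_ne_top)
    ((f.integrable _).smul_measure ENNReal.ofReal_ne_top), integral_smul_measure,
    integral_smul_measure, hd, ENNReal.toReal_ofReal (sub_nonneg.2 h1), ENNReal.toReal_ofReal h0]
  simp

lemma real_diracMix {X : Type*} [MeasurableSpace X] (μ : ProbabilityMeasure X) (x : X)
    (t : ℝ) (h0 : 0 ≤ t) (h1 : t ≤ 1) {A : Set X} (hA : MeasurableSet A) (hx : x ∈ A) :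
    (diracMix μ x t h0 h1 : Measure X).real A = (1 - t) * (μ : Measure X).real A + t := by
  simp only [diracMix, ProbabilityMeasure.coe_mk]
  rw [measureReal_add_apply
      (by simpa using ENNReal.mul_ne_top ENNReal.ofReal_ne_top (measure_ne_top _ A))
      (by simpa using ENNReal.mul_ne_top ENNReal.ofReal_ne_top (measure_ne_top (Measure.dirac x) A)),
    measureReal_ennreal_smul_apply, measureReal_ennreal_smul_apply,
    ENNReal.toReal_ofReal (sub_nonneg.2 h1), ENNReal.toReal_ofReal h0]
  simp [Measure.real, Measure.dirac_apply' x hA, hx]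

lemma exists_real_singleton_lt_one {X : Type*} (F : X → ℝ) (hnc : ∃ x₁ x₂ : X, F x₁ ≠ F x₂)
    (ν : ProbabilityMeasure ℝ) : ∃ x, (ν : Measure ℝ).real {F x} < 1 := by
  obtain ⟨x₁, x₂, hne⟩ := hnc
  by_contra! h
  have hu := measureReal_union (μ := (ν : Measure ℝ)) (Set.disjoint_singleton.2 hne)
    (measurableSet_singleton (F x₂))
  have hle : (ν : Measure ℝ).real ({F x₁} ∪ {F x₂}) ≤ 1 := measureReal_le_one
  linarith [h x₁, h x₂]

/-- For a separable metric space `X`, a continuous non-constant `F : X → ℝ` and a measure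
`ν ∈ F_*(P(X))`, the complement `{μ ∈ P(X) : F_*(μ) ≠ ν}` of the fiber `F_*⁻¹({ν})` is a dense
open subset of `P(X)` for the topology of weak convergence. -/
theorem isOpen_dense_pushforward_ne
    {X : Type*} [MetricSpace X] [TopologicalSpace.SeparableSpace X]
    [MeasurableSpace X] [BorelSpace X]
    (F : X → ℝ) (hF : Continuous F) (hnc : ∃ x₁ x₂ : X, F x₁ ≠ F x₂)
    (ν : ProbabilityMeasure ℝ)
    (hν : ∃ μ₀ : ProbabilityMeasure X, μ₀.map (f := F) hF.measurable.aemeasurable = ν) :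
    IsOpen {μ : ProbabilityMeasure X |
        μ.map (f := F) hF.measurable.aemeasurable ≠ ν} ∧
      Dense {μ : ProbabilityMeasure X |
        μ.map (f := F) hF.measurable.aemeasurable ≠ ν} := by
  refine ⟨isOpen_ne.preimage (ProbabilityMeasure.continuous_map hF), fun μ ↦ ?_⟩
  by_cases hμ : μ.map (f := F) hF.measurable.aemeasurable = ν
  swap
  · exact subset_closure hμ
  obtain ⟨x, hx⟩ := exists_real_singleton_lt_one F hnc ν
  have h0 (n : ℕ) : (0 : ℝ) < 1 / ((n : ℝ) + 1) := Nat.one_div_pos_of_nat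
  have h1 (n : ℕ) : 1 / ((n : ℝ) + 1) ≤ 1 := by
    rw [div_le_one (by positivity)]
    linarith [n.cast_nonneg (α := ℝ)]
  have ht := tendsto_one_div_add_atTop_nhds_zero_nat (𝕜 := ℝ)
  refine mem_closure_of_tendsto (b := Filter.atTop)
    (f := fun n : ℕ ↦ diracMix μ x (1 / ((n : ℝ) + 1)) (h0 n).le (h1 n)) ?_
    (Filter.Eventually.of_forall fun n hn ↦ ?_)
  · rw [ProbabilityMeasure.tendsto_iff_forall_integral_tendsto]
    intro f
    simp only [integral_diracMix]
    simpa using ((ht.const_sub 1).mul_const (∫ y, f y ∂(μ : Measure X))).add (ht.mul_const (f x))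
  · have hmap (ρ : ProbabilityMeasure X)
        (hρ : ρ.map (f := F) hF.measurable.aemeasurable = ν) :
        (ρ : Measure X).real (F ⁻¹' {F x}) = (ν : Measure ℝ).real {F x} := by
      rw [← hρ, ProbabilityMeasure.toMeasure_map,
        map_measureReal_apply hF.measurable (measurableSet_singleton _)]
    have e := hmap _ hn
    rw [real_diracMix _ _ _ _ _ (hF.measurable (measurableSet_singleton _)) rfl, hmap μ hμ] at e
    nlinarith [mul_pos (h0 n) (sub_pos.2 hx)]
end

section
/- Let F : ℝⁿ → ℝᵏ be a continuous non-constant function (i.e. there exist points y₁, y₂ ∈ ℝⁿ with F(y₁) ≠ F(y₂)), and let μ be a Borel probability measure on ℝⁿ. Then the set {μ' ∈ P(ℝⁿ) : F_*(μ') ≠ F_*(μ)} of Borel probability measures on ℝⁿ whose pushforward under F differs from that of μ is a dense open subset of P(ℝⁿ) for the topology of weak convergence. -/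
/-! The set is open because pushforward under a continuous map is weakly continuous and `P(ℝᵏ)` is
Hausdorff, so it is the preimage of the complement of a closed point.

For density, let `F_*ν = F_*μ`. As `F` takes two values, some value `F x` has
`F_*ν {F x} ≠ 1`. The segment `t ↦ (1 - t) ν + t δ_x` is weakly continuous and starts at `ν`, while
for `t > 0` its pushforward gives `{F x}` strictly more mass than `F_*ν` does. -/

open MeasureTheory Set

/-- The convex combination `(1 - t) ν + t δ_x`, as a probability measure. -/
noncomputable def mixDirac {X : Type*} [MeasurableSpace X] (ν : ProbabilityMeasure X) (x : X)
    (t : unitInterval) : ProbabilityMeasure X :=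
  ⟨ENNReal.ofReal (1 - t) • (ν : Measure X) + ENNReal.ofReal t • Measure.dirac x, ⟨by
    have h0 : (0 : ℝ) ≤ t := t.2.1
    have h1 : (0 : ℝ) ≤ 1 - t := sub_nonneg.2 t.2.2
    simp [← ENNReal.ofReal_add h1 h0]⟩⟩

lemma mixDirac_zero {X : Type*} [MeasurableSpace X] (ν : ProbabilityMeasure X) (x : X) :
    mixDirac ν x 0 = ν := by
  apply Subtype.ext
  simp [mixDirac]

lemma continuous_mixDirac {X : Type*} [MeasurableSpace X] [TopologicalSpace X] [BorelSpace X]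
    (ν : ProbabilityMeasure X) (x : X) : Continuous (mixDirac ν x) := by
  rw [ProbabilityMeasure.continuous_iff_forall_continuous_integral]
  intro f
  have key : ∀ t : unitInterval, ∫ y, f y ∂(mixDirac ν x t : Measure X)
      = (1 - (t : ℝ)) * ∫ y, f y ∂(ν : Measure X) + t * f x := by
    intro t
    have h0 : (0 : ℝ) ≤ t := t.2.1
    have h1 : (0 : ℝ) ≤ 1 - t := sub_nonneg.2 t.2.2
    have hd : ∫ y, f y ∂(Measure.dirac x) = f x :=
      integral_dirac' _ _ f.continuous.measurable.stronglyMeasurable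
    simp only [mixDirac, ProbabilityMeasure.coe_mk]
    rw [integral_add_measure ((f.integrable _).smul_measure ENNReal.ofReal_ne_top)
      ((f.integrable _).smul_measure ENNReal.ofReal_ne_top),
      integral_smul_measure, integral_smul_measure, hd,
      ENNReal.toReal_ofReal h0, ENNReal.toReal_ofReal h1, smul_eq_mul, smul_eq_mul]
  simp_rw [key]
  fun_prop

lemma mixDirac_real {X : Type*} [MeasurableSpace X] (ν : ProbabilityMeasure X) {x : X}
    (t : unitInterval) {s : Set X} (hs : MeasurableSet s) (hx : x ∈ s) :
    (mixDirac ν x t : Measure X).real s = (1 - t) * (ν : Measure X).real s + t := by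
  have h0 : (0 : ℝ) ≤ t := t.2.1
  have h1 : (0 : ℝ) ≤ 1 - t := sub_nonneg.2 t.2.2
  simp only [mixDirac, ProbabilityMeasure.coe_mk]
  rw [measureReal_add_apply (by rw [Measure.smul_apply, smul_eq_mul]; finiteness)
    (by rw [Measure.smul_apply, smul_eq_mul]; finiteness)]
  simp [measureReal_def, Measure.dirac_apply' x hs, hx, h0, h1]

/-- For `F y₁ ≠ F y₂`, no probability measure gives full mass to both fibres. -/
lemma exists_fibre_real_ne_one {X Y : Type*} [MeasurableSpace X] (F : X → Y)
    (hnc : ∃ y₁ y₂ : X, F y₁ ≠ F y₂) (hF : ∀ y, MeasurableSet (F ⁻¹' {y}))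
    (ν : ProbabilityMeasure X) :
    ∃ x, (ν : Measure X).real (F ⁻¹' {F x}) ≠ 1 := by
  obtain ⟨y₁, y₂, h⟩ := hnc
  by_contra! hc
  have hd : Disjoint (F ⁻¹' {F y₁}) (F ⁻¹' {F y₂}) :=
    Disjoint.preimage F (by simpa using h)
  have hu := measureReal_union (μ := (ν : Measure X)) hd (hF _)
  have hle : (ν : Measure X).real (F ⁻¹' {F y₁} ∪ F ⁻¹' {F y₂}) ≤ 1 := measureReal_le_one
  rw [hc, hc] at hu
  linarith



/-- For a continuous non-constant `F : ℝⁿ → ℝᵏ` and a Borel probability measure `μ` on `ℝⁿ`,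
the set of Borel probability measures `μ'` on `ℝⁿ` with `F_*(μ') ≠ F_*(μ)` is a dense open
subset of `P(ℝⁿ)` for the topology of weak convergence. -/
theorem isOpen_dense_pushforward_ne_euclidean
    {n k : ℕ} (F : EuclideanSpace ℝ (Fin n) → EuclideanSpace ℝ (Fin k))
    (hF : Continuous F) (hnc : ∃ y₁ y₂ : EuclideanSpace ℝ (Fin n), F y₁ ≠ F y₂)
    (μ : ProbabilityMeasure (EuclideanSpace ℝ (Fin n))) :
    IsOpen {μ' : ProbabilityMeasure (EuclideanSpace ℝ (Fin n)) |
        μ'.map (f := F) hF.measurable.aemeasurable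
          ≠ μ.map (f := F) hF.measurable.aemeasurable} ∧
      Dense {μ' : ProbabilityMeasure (EuclideanSpace ℝ (Fin n)) |
        μ'.map (f := F) hF.measurable.aemeasurable
          ≠ μ.map (f := F) hF.measurable.aemeasurable} := by
  constructor
  · exact isOpen_ne_fun (ProbabilityMeasure.continuous_map hF) continuous_const
  · intro ν
    by_cases hν : ν.map (f := F) hF.measurable.aemeasurable
        = μ.map (f := F) hF.measurable.aemeasurable
    swap
    · exact subset_closure hν
    have hms : ∀ y, MeasurableSet (F ⁻¹' {y}) := fun y => hF.measurable (measurableSet_singleton y)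
    obtain ⟨x, hx⟩ := exists_fibre_real_ne_one F hnc hms ν
    have h0 : (0 : unitInterval) ∈ closure (Ioi 0) := by
      rw [closure_Ioi' ⟨1, by simp⟩]
      simp
    have := map_mem_closure (continuous_mixDirac ν x) h0 (t := {μ' | μ'.map (f := F)
      hF.measurable.aemeasurable ≠ μ.map (f := F) hF.measurable.aemeasurable}) ?_
    · rwa [mixDirac_zero] at this
    intro t ht heq
    rw [← hν] at heq
    have ht' : (0 : ℝ) < t := ht
    have h2 := congrArg (fun ρ : ProbabilityMeasure (EuclideanSpace ℝ (Fin k)) =>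
      (ρ : Measure (EuclideanSpace ℝ (Fin k))).real {F x}) heq
    simp only [ProbabilityMeasure.toMeasure_map] at h2
    rw [map_measureReal_apply hF.measurable (measurableSet_singleton _),
      map_measureReal_apply hF.measurable (measurableSet_singleton _),
      mixDirac_real ν t (hms _) (by simp)] at h2
    apply hx
    -- `h2` reads `(1 - t) a + t = a`, i.e. `t (1 - a) = 0`.
    apply mul_left_cancel₀ ht'.ne'
    linarith
end
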